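/- Let S be a Steiner triple system of order n with n > 3. If α(S) = (1/3)·C(n,2), then A(S) = S. -/

import Mathlib

/-!
The idea is to show that equality in the count forces `A(S)` to cover every pair of points exactly
once, and then to apply this to one cleverly chosen triangle.

Every member of `A(S)` has three elements (`card_of_mem_ASet`), and if `n > 3` every pair `x ≠ y`
lies in a member of `A(S)`: for `b ∉ {x, y, x ⋆ y}` the points `x ⋆ b, b, y ⋆ b` form a triangle,
which yields `{x, y, (x ⋆ b) ⋆ (y ⋆ b)} ∈ A(S)` (`mem_ASet_of_apex`). Double counting incidences
between pairs and members of `A(S)` gives `C(n, 2) ≤ 3 α(S)`, with equality only if every pair lies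
in exactly one member (`ASet_unique`).

Assume equality and let `{x, y, z} ∈ A(S)`. If `z ≠ x ⋆ y`, then `b = z` is allowed above, so
`{x, y, (x ⋆ z) ⋆ (y ⋆ z)} ∈ A(S)`; by uniqueness `(x ⋆ z) ⋆ (y ⋆ z) = z`, which cancels to
`x ⋆ z = y`, that is `z = x ⋆ y`, a contradiction. Hence `A(S) ⊆ S`, and the reverse inclusion
follows because every pair is covered by `A(S)`.
-/


/-- A Steiner quasigroup structure on `X`. -/
def IsSteinerQuasigroup {X : Type*} (star : X → X → X) : Prop :=
  (∀ a, star a a = a) ∧ (∀ a b, star a b = star b a) ∧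
    (∀ a b, star a (star a b) = b)

/-- The blocks of the Steiner triple system associated to a Steiner quasigroup:
the 3-element subsets `{a,b,c}` with `a,b,c` distinct and `a ⋆ b = c`. -/
def blocksOf {X : Type*} [DecidableEq X] (star : X → X → X) : Set (Finset X) :=
  {B | ∃ a b c : X, a ≠ b ∧ a ≠ c ∧ b ≠ c ∧ B = {a, b, c} ∧ star a b = c}

/-- `A(S) = {{a⋆b, b⋆c, c⋆a} : a,b,c pairwise distinct, {a,b,c} ∉ S}`. -/
def ASet {X : Type*} [DecidableEq X] (star : X → X → X) : Set (Finset X) :=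
  {B | ∃ a b c : X, a ≠ b ∧ a ≠ c ∧ b ≠ c ∧
    ({a, b, c} : Finset X) ∉ blocksOf star ∧
    B = {star a b, star b c, star c a}}

/-- `B(S) = {{a⋆b, b⋆c, c⋆a} : a,b,c pairwise distinct}`. -/
def BSet {X : Type*} [DecidableEq X] (star : X → X → X) : Set (Finset X) :=
  {B | ∃ a b c : X, a ≠ b ∧ a ≠ c ∧ b ≠ c ∧
    B = {star a b, star b c, star c a}}

/-- `α(S) = |A(S)|`. -/
noncomputable def alphaInv {X : Type*} [DecidableEq X] (star : X → X → X) : ℕ :=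
  (ASet star).ncard

/-- `β(S) = |B(S)|`. -/
noncomputable def betaInv {X : Type*} [DecidableEq X] (star : X → X → X) : ℕ :=
  (BSet star).ncard

/-- A pasch configuration: four blocks `{a,b,c}, {a,d,e}, {f,b,d}, {f,c,e}`
with `a,b,c,d,e,f` pairwise distinct. -/
def IsPasch {X : Type*} [DecidableEq X] (P : Set (Finset X)) : Prop :=
  ∃ a b c d e f : X, ([a, b, c, d, e, f] : List X).Pairwise (· ≠ ·) ∧
    P = {({a, b, c} : Finset X), {a, d, e}, {f, b, d}, {f, c, e}}

/-- A Steiner triple system is anti-pasch if it contains no pasch configuration. -/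
def IsAntiPasch {X : Type*} [DecidableEq X] (star : X → X → X) : Prop :=
  ∀ P : Set (Finset X), IsPasch P → ¬ P ⊆ blocksOf star


section Steiner

variable {X : Type*} {star : X → X → X}

theorem star_right_cancel (hq : IsSteinerQuasigroup star) {a b c : X}
    (h : star a c = star b c) : a = b := by
  obtain ⟨-, h2, h3⟩ := hq
  rw [h2 a, h2 b] at h
  rw [← h3 c a, h, h3]

theorem star_ne_left (hq : IsSteinerQuasigroup star) {a b : X} (h : a ≠ b) : star a b ≠ a := by
  intro e
  have h3 := hq.2.2 a b
  rw [e, hq.1] at h3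
  exact h h3

theorem star_ne_right (hq : IsSteinerQuasigroup star) {a b : X} (h : a ≠ b) : star a b ≠ b := by
  rw [hq.2.1]
  exact star_ne_left hq h.symm

variable [DecidableEq X]

theorem star_mem_block (hq : IsSteinerQuasigroup star) {B : Finset X} (hB : B ∈ blocksOf star)
    {u v : X} (hu : u ∈ B) (hv : v ∈ B) : star u v ∈ B := by
  obtain ⟨a, b, c, -, -, -, rfl, rfl⟩ := hB
  obtain ⟨h1, h2, h3⟩ := hq
  have e1 : star (star a b) a = b := by rw [h2, h3]
  simp only [Finset.mem_insert, Finset.mem_singleton] at hu hv ⊢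
  rcases hu with rfl | rfl | rfl <;> rcases hv with rfl | rfl | rfl <;>
    simp [h1, h3, e1, h2]

theorem star_eq_of_block (hq : IsSteinerQuasigroup star) {a b c : X} (hab : a ≠ b)
    (hB : ({a, b, c} : Finset X) ∈ blocksOf star) : star a b = c := by
  have h := star_mem_block hq hB (u := a) (v := b) (by simp) (by simp)
  simpa [star_ne_left hq hab, star_ne_right hq hab] using h

theorem card_of_mem_ASet (hq : IsSteinerQuasigroup star) {B : Finset X} (hB : B ∈ ASet star) :
    B.card = 3 := by
  obtain ⟨a, b, c, hab, hac, hbc, -, rfl⟩ := hB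
  rw [Finset.card_eq_three]
  refine ⟨_, _, _, ?_, ?_, ?_, rfl⟩
  · intro h
    rw [hq.2.1 b c] at h
    exact hac (star_right_cancel hq h)
  · intro h
    rw [hq.2.1 a b] at h
    exact hbc (star_right_cancel hq h)
  · intro h
    rw [hq.2.1 c a] at h
    exact hab (star_right_cancel hq h).symm

/-- The points `x ⋆ b, b, y ⋆ b` are the vertices of a triangle two of whose sides pass through
`x` and `y`. -/
theorem mem_ASet_of_apex (hq : IsSteinerQuasigroup star) {x y b : X} (hxy : x ≠ y)
    (hx : b ≠ x) (hy : b ≠ y) (hb : b ≠ star x y) :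
    ({x, y, star (star x b) (star y b)} : Finset X) ∈ ASet star := by
  have e (u : X) : star (star u b) b = u := by
    rw [hq.2.1 _ b, hq.2.1 u b, hq.2.2]
  refine ⟨star x b, b, star y b, star_ne_right hq hx.symm, ?_, (star_ne_right hq hy.symm).symm,
    ?_, ?_⟩
  · exact fun h => hxy (star_right_cancel hq h)
  · intro h
    have h' := star_eq_of_block hq (star_ne_right hq hx.symm) h
    rw [e] at h'
    apply hb
    rw [h', hq.2.1 y b, hq.2.1, hq.2.1 b y, hq.2.2]
  · rw [e, hq.2.1 b, e, hq.2.1 (star y b)]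

theorem exists_mem_ASet [Fintype X] (hq : IsSteinerQuasigroup star) (hn : 3 < Fintype.card X)
    {x y : X} (hxy : x ≠ y) : ∃ B ∈ ASet star, x ∈ B ∧ y ∈ B := by
  obtain ⟨b, -, hb⟩ := Finset.exists_mem_notMem_of_card_lt_card
    (s := {x, y, star x y}) (t := Finset.univ)
    (lt_of_le_of_lt Finset.card_le_three (by simpa using hn))
  simp only [Finset.mem_insert, Finset.mem_singleton, not_or] at hb
  exact ⟨_, mem_ASet_of_apex hq hxy hb.1 hb.2.1 hb.2.2, by simp, by simp⟩

/-- In the case of equality the members of `A(S)` form a linear space: each pair of points has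
multiplicity at least one, and the multiplicities sum to the number of pairs. -/
theorem ASet_unique [Fintype X] (hq : IsSteinerQuasigroup star) (hn : 3 < Fintype.card X)
    (ha : 3 * alphaInv star = (Fintype.card X).choose 2) {B C : Finset X}
    (hB : B ∈ ASet star) (hC : C ∈ ASet star) {x y : X} (hxy : x ≠ y)
    (hxB : x ∈ B) (hyB : y ∈ B) (hxC : x ∈ C) (hyC : y ∈ C) : B = C := by
  classical
  set F : Finset (Finset X) := (ASet star).toFinset with hF
  have memF (D : Finset X) : D ∈ F ↔ D ∈ ASet star := by simp [hF]
  set P : Finset (Finset X) := Finset.univ.powersetCard 2 with hP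
  have hcount : ∑ p ∈ P, (F.filter fun D => p ⊆ D).card = P.card := by
    have h := Finset.sum_card_bipartiteAbove_eq_sum_card_bipartiteBelow
      (s := P) (t := F) (fun p D : Finset X => p ⊆ D)
    have h3 : ∀ D ∈ F, (P.filter fun p => p ⊆ D).card = 3 := by
      intro D hD
      have : (P.filter fun p => p ⊆ D) = D.powersetCard 2 := by
        ext p
        simp [hP, Finset.mem_powersetCard, and_comm]
      rw [this, Finset.card_powersetCard, card_of_mem_ASet hq ((memF D).1 hD)]
      rfl
    simp only [Finset.bipartiteAbove, Finset.bipartiteBelow] at h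
    rw [h, Finset.sum_congr rfl h3, Finset.sum_const, smul_eq_mul, hP,
      Finset.card_powersetCard, Finset.card_univ, ← ha, alphaInv, Set.ncard_eq_toFinset_card',
      mul_comm]
  have hpos : ∀ p ∈ P, 1 ≤ (F.filter fun D => p ⊆ D).card := by
    intro p hp
    obtain ⟨u, v, huv, rfl⟩ := Finset.card_eq_two.1 (Finset.mem_powersetCard.1 hp).2
    obtain ⟨D, hD, hu, hv⟩ := exists_mem_ASet hq hn huv
    refine Finset.card_pos.2 ⟨D, ?_⟩
    simp [memF, hD, Finset.insert_subset_iff, hu, hv]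
  have hone := (Finset.sum_eq_sum_iff_of_le hpos).1
    (by rw [hcount, Finset.sum_const, smul_eq_mul, mul_one])
  have hxyP : ({x, y} : Finset X) ∈ P := by
    simp [hP, Finset.mem_powersetCard, Finset.card_pair hxy]
  refine Finset.card_le_one.1 (hone _ hxyP).ge B ?_ C ?_
  · simp [memF, hB, Finset.insert_subset_iff, hxB, hyB]
  · simp [memF, hC, Finset.insert_subset_iff, hxC, hyC]

end Steiner

/-- If `α(S) = (1/3)·C(n,2)` then `A(S) = S`. -/
theorem stmt5 {X : Type*} [Fintype X] [DecidableEq X]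
    (star : X → X → X) (hq : IsSteinerQuasigroup star)
    (n : ℕ) (hcard : Fintype.card X = n) (hn : 3 < n)
    (ha : 3 * alphaInv star = n.choose 2) :
    ASet star = blocksOf star := by
  subst hcard
  have hsub : ASet star ⊆ blocksOf star := by
    intro B hB
    obtain ⟨x, y, z, hxy, hxz, hyz, rfl⟩ := Finset.card_eq_three.1 (card_of_mem_ASet hq hB)
    refine ⟨x, y, z, hxy, hxz, hyz, rfl, ?_⟩
    by_contra hne
    have hC := mem_ASet_of_apex hq hxy hxz.symm hyz.symm (Ne.symm hne)
    have hBC := ASet_unique hq hn ha hB hC hxy (by simp) (by simp) (by simp) (by simp)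
    have hz : z ∈ ({x, y, star (star x z) (star y z)} : Finset X) := hBC ▸ (by simp)
    have hz' : z = star (star x z) (star y z) := by
      simpa [hxz.symm, hyz.symm] using hz
    -- Both sides are products with `y ⋆ z`, since `z = y ⋆ (y ⋆ z)`.
    have hy : y = star x z := star_right_cancel hq ((hq.2.2 y z).trans hz')
    exact hne (by rw [hy, hq.2.2])
  refine hsub.antisymm ?_
  rintro B ⟨a, b, c, hab, hac, hbc, rfl, rfl⟩
  obtain ⟨D, hD, haD, hbD⟩ := exists_mem_ASet hq hn hab
  have hs : ({a, b, star a b} : Finset X) ⊆ D := by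
    simp [Finset.insert_subset_iff, haD, hbD, star_mem_block hq (hsub hD) haD hbD]
  rwa [Finset.eq_of_subset_of_card_le hs (by
    rw [card_of_mem_ASet hq hD, Finset.card_eq_three.2 ⟨a, b, _, hab, hac, hbc, rfl⟩])]
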